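/- Let M and N be finite-dimensional left 𝕆-modules of types (m₁,m₂) and (n₁,n₂) respectively, where the type of a module X is (dim_ℝ 𝒜(X), dim_ℝ 𝒜⁻(X)). Then the real vector space Hom_𝕆(M,N) of left 𝕆-module homomorphisms from M to N is ℝ-linearly isomorphic to M_{n₁×m₁}(ℝ) ⊕ M_{n₂×m₂}(ℝ); in particular dim_ℝ Hom_𝕆(M,N) = n₁m₁ + n₂m₂. -/

import Mathlib

noncomputable section

open scoped Quaternion

/-- The octonions, realized as pairs of quaternions via the Cayley–Dickson construction. -/
def Octo : Type := ℍ[ℝ] × ℍ[ℝ]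

namespace Octo

instance : AddCommGroup Octo := inferInstanceAs (AddCommGroup (ℍ[ℝ] × ℍ[ℝ]))
instance : Module ℝ Octo := inferInstanceAs (Module ℝ (ℍ[ℝ] × ℍ[ℝ]))

/-- Build an octonion from a pair of quaternions. -/
def mk (a b : ℍ[ℝ]) : Octo := (a, b)

/-- First quaternion component. -/
def p1 (x : Octo) : ℍ[ℝ] := (show ℍ[ℝ] × ℍ[ℝ] from x).1

/-- Second quaternion component. -/
def p2 (x : Octo) : ℍ[ℝ] := (show ℍ[ℝ] × ℍ[ℝ] from x).2

/-- Cayley–Dickson multiplication: `(a,b)(c,d) = (ac − d̄b, da + bc̄)`. -/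
instance : Mul Octo :=
  ⟨fun x y => mk (p1 x * p1 y - star (p2 y) * p2 x) (p2 y * p1 x + p2 x * star (p1 y))⟩

instance : One Octo := ⟨mk 1 0⟩

/-- Octonion conjugation: for `x = (a,b)`, `x̄ = (ā, −b)`. -/
def conj (x : Octo) : Octo := mk (star (p1 x)) (-(p2 x))

/-- The octonion associator `[x,y,z] = (xy)z − x(yz)`. -/
def assoc (x y z : Octo) : Octo := x * y * z - x * (y * z)

/-- The octonion commutator `[x,y] = xy − yx`. -/
def comm (x y : Octo) : Octo := x * y - y * x

/-- The canonical embedding of the reals into the octonions. -/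
def ofReal (r : ℝ) : Octo := r • (1 : Octo)

end Octo

section OMod

variable {M : Type*} [AddCommGroup M] [Module ℝ M]
variable {N : Type*} [AddCommGroup N] [Module ℝ N]

/-- `IsOMod sm` says that the scalar multiplication `sm : 𝕆 × M → M` makes the real vector
space `M` a left 𝕆-module: `sm` is ℝ-bilinear, unital, and the left associator is
alternating in its two octonion arguments. -/
structure IsOMod (sm : Octo → M → M) : Prop where
  smul_add : ∀ (p : Octo) (m n : M), sm p (m + n) = sm p m + sm p n
  add_smul : ∀ (p q : Octo) (m : M), sm (p + q) m = sm p m + sm q m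
  real_smul : ∀ (r : ℝ) (p : Octo) (m : M), sm (r • p) m = r • sm p m
  smul_real : ∀ (r : ℝ) (p : Octo) (m : M), sm p (r • m) = r • sm p m
  one_smul : ∀ m : M, sm 1 m = m
  alt : ∀ (p q : Octo) (m : M),
    sm (p * q) m - sm p (sm q m) = -(sm (q * p) m - sm q (sm p m))

/-- The left associator `[p,q,m] = (pq)m − p(qm)`. -/
def oLassoc (sm : Octo → M → M) (p q : Octo) (m : M) : M :=
  sm (p * q) m - sm p (sm q m)

/-- The set `𝒜(M)` of associative elements: `[p,q,m] = 0` for all `p,q ∈ 𝕆`. -/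
def assocSet (sm : Octo → M → M) : Set M :=
  {m | ∀ p q : Octo, oLassoc sm p q m = 0}

/-- The set `𝒜⁻(M)` of conjugate associative elements: `(pq)m = q(pm)` for all `p,q ∈ 𝕆`. -/
def conjAssocSet (sm : Octo → M → M) : Set M :=
  {m | ∀ p q : Octo, sm (p * q) m = sm q (sm p m)}

/-- A homomorphism of left 𝕆-modules: an ℝ-linear map commuting with 𝕆-scalar
multiplication. -/
def IsOHom (sm : Octo → M → M) (sm' : Octo → N → N) (f : M → N) : Prop :=
  IsLinearMap ℝ f ∧ ∀ (p : Octo) (m : M), f (sm p m) = sm' p (f m)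

/-- Two left 𝕆-modules are isomorphic if there is a bijective homomorphism between them. -/
def OIso (sm : Octo → M → M) (sm' : Octo → N → N) : Prop :=
  ∃ f : M → N, IsOHom sm sm' f ∧ Function.Bijective f

/-- A submodule: a real subspace closed under 𝕆-scalar multiplication. -/
structure IsOSubmodule (sm : Octo → M → M) (S : Set M) : Prop where
  zero_mem : (0 : M) ∈ S
  add_mem : ∀ {x y : M}, x ∈ S → y ∈ S → x + y ∈ S
  smul_mem : ∀ (r : ℝ) {x : M}, x ∈ S → r • x ∈ S
  osmul_mem : ∀ (p : Octo) {x : M}, x ∈ S → sm p x ∈ S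

/-- `⟨m⟩_𝕆`, the smallest submodule containing `m`, as a set. -/
def genSet (sm : Octo → M → M) (m : M) : Set M :=
  ⋂₀ {S : Set M | IsOSubmodule sm S ∧ m ∈ S}

/-- An element `m` is cyclic if `⟨m⟩_𝕆 = 𝕆m`. -/
def IsOCyclic (sm : Octo → M → M) (m : M) : Prop :=
  genSet sm m = {x | ∃ p : Octo, x = sm p m}

/-- 𝕆-linear independence of a subset `S ⊆ M`: any finite 𝕆-linear combination of
distinct elements of `S` that vanishes has all coefficients zero. -/
def OLinIndep (sm : Octo → M → M) (S : Set M) : Prop :=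
  ∀ (n : ℕ) (s : Fin n → M) (r : Fin n → Octo), Function.Injective s → (∀ i, s i ∈ S) →
    (∑ i, sm (r i) (s i)) = 0 → ∀ i, r i = 0

end OMod

/-- The canonical left 𝕆-module structure on 𝕆 itself. -/
def oSmul : Octo → Octo → Octo := fun p x => p * x

/-- The left 𝕆-module structure `𝕆̄` on 𝕆: `p ·̂ x = p̄x`. -/
def oBarSmul : Octo → Octo → Octo := fun p x => Octo.conj p * x

theorem IsOMod.osmul_zero {N : Type*} [AddCommGroup N] [Module ℝ N]
    {sm : Octo → N → N} (h : IsOMod sm) (p : Octo) : sm p (0 : N) = 0 := by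
  have := h.smul_real 0 p 0
  simpa using this

/-- `Hom_𝕆(M,N)` as a real subspace of the ℝ-linear maps `M →ₗ[ℝ] N`. -/
def oHomSubmodule {M : Type*} [AddCommGroup M] [Module ℝ M]
    {N : Type*} [AddCommGroup N] [Module ℝ N]
    (sm : Octo → M → M) (sm' : Octo → N → N) (h' : IsOMod sm') :
    Submodule ℝ (M →ₗ[ℝ] N) where
  carrier := {f | ∀ (p : Octo) (m : M), f (sm p m) = sm' p (f m)}
  zero_mem' := by
    intro p m
    simp [h'.osmul_zero p]
  add_mem' := by
    intro f g hf hg p m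
    simp only [LinearMap.add_apply, hf p m, hg p m, (h'.smul_add p _ _).symm]
  smul_mem' := by
    intro c f hf p m
    simp only [LinearMap.smul_apply, hf p m, (h'.smul_real c p _).symm]

namespace Octo

/-- A quaternion with given coordinates. -/
def qu (a b c d : ℝ) : ℍ[ℝ] := ⟨a, b, c, d⟩
@[simp] theorem qu_re (a b c d : ℝ) : (qu a b c d).re = a := rfl
@[simp] theorem qu_imI (a b c d : ℝ) : (qu a b c d).imI = b := rfl
@[simp] theorem qu_imJ (a b c d : ℝ) : (qu a b c d).imJ = c := rfl
@[simp] theorem qu_imK (a b c d : ℝ) : (qu a b c d).imK = d := rfl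

/-- The standard basis of the octonions. -/
def e : Fin 8 → Octo :=
  ![mk (qu 1 0 0 0) 0, mk (qu 0 1 0 0) 0, mk (qu 0 0 1 0) 0, mk (qu 0 0 0 1) 0,
    mk 0 (qu 1 0 0 0), mk 0 (qu 0 1 0 0), mk 0 (qu 0 0 1 0), mk 0 (qu 0 0 0 1)]

/-- Index table. -/
def ix : Fin 8 → Fin 8 → Fin 8 :=
  ![![0,1,2,3,4,5,6,7], ![1,0,3,2,5,4,7,6], ![2,3,0,1,6,7,4,5], ![3,2,1,0,7,6,5,4],
    ![4,5,6,7,0,1,2,3], ![5,4,7,6,1,0,3,2], ![6,7,4,5,2,3,0,1], ![7,6,5,4,3,2,1,0]]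

/-- Sign table. -/
def sg : Fin 8 → Fin 8 → ℤ :=
  ![![1,1,1,1,1,1,1,1], ![1,-1,1,-1,1,-1,-1,1], ![1,-1,-1,1,1,1,-1,-1], ![1,1,-1,-1,1,-1,1,-1],
    ![1,-1,-1,-1,-1,1,1,1], ![1,1,-1,1,-1,-1,-1,1], ![1,1,1,-1,-1,1,-1,-1],
    ![1,-1,1,1,-1,-1,1,-1]]

theorem octo_ext {x y : Octo} (h1 : x.p1 = y.p1) (h2 : x.p2 = y.p2) : x = y :=
  Prod.ext h1 h2

@[simp] theorem p1_mk (a b : ℍ[ℝ]) : (mk a b).p1 = a := rfl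
@[simp] theorem p2_mk (a b : ℍ[ℝ]) : (mk a b).p2 = b := rfl
@[simp] theorem p1_add (x y : Octo) : (x + y).p1 = x.p1 + y.p1 := rfl
@[simp] theorem p2_add (x y : Octo) : (x + y).p2 = x.p2 + y.p2 := rfl
@[simp] theorem p1_neg (x : Octo) : (-x).p1 = -x.p1 := rfl
@[simp] theorem p2_neg (x : Octo) : (-x).p2 = -x.p2 := rfl
@[simp] theorem p1_smul (r : ℝ) (x : Octo) : (r • x).p1 = r • x.p1 := rfl
@[simp] theorem p2_smul (r : ℝ) (x : Octo) : (r • x).p2 = r • x.p2 := rfl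
@[simp] theorem p1_one : (1 : Octo).p1 = 1 := rfl
@[simp] theorem p2_one : (1 : Octo).p2 = 0 := rfl
@[simp] theorem p1_mul (x y : Octo) : (x * y).p1 = x.p1 * y.p1 - star y.p2 * x.p2 := rfl
@[simp] theorem p2_mul (x y : Octo) : (x * y).p2 = y.p2 * x.p1 + x.p2 * star y.p1 := rfl
@[simp] theorem p1_conj (x : Octo) : (conj x).p1 = star x.p1 := rfl
@[simp] theorem p2_conj (x : Octo) : (conj x).p2 = - x.p2 := rfl

theorem e_zero : e 0 = 1 := rfl

set_option maxHeartbeats 2000000 in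
theorem e_mul (i j : Fin 8) : e i * e j = sg i j • e (ix i j) := by
  fin_cases i <;> fin_cases j <;> apply octo_ext <;> ext <;> simp [e, ix, sg]

/-- Coordinates. -/
def co (p : Octo) : Fin 8 → ℝ :=
  ![p.p1.re, p.p1.imI, p.p1.imJ, p.p1.imK, p.p2.re, p.p2.imI, p.p2.imJ, p.p2.imK]

theorem eq_sum (p : Octo) : p = ∑ i, co p i • e i := by
  apply octo_ext <;> ext <;> simp [Fin.sum_univ_eight, e, co]

theorem lin_ext {X : Type*} [AddCommGroup X] [Module ℝ X] {f g : Octo →ₗ[ℝ] X}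
    (h : ∀ i, f (e i) = g (e i)) : f = g := by
  ext p
  rw [eq_sum p]
  simp [h]

/-- Multiplication as a bilinear map. -/
def mulL : Octo →ₗ[ℝ] Octo →ₗ[ℝ] Octo :=
  LinearMap.mk₂ ℝ (fun x y => x * y)
    (by intros; apply octo_ext <;> simp <;> noncomm_ring)
    (by intros; apply octo_ext <;> simp [smul_sub])
    (by intros; apply octo_ext <;> simp <;> noncomm_ring)
    (by intros; apply octo_ext <;> simp [smul_sub])

theorem mulL_apply (x y : Octo) : mulL x y = x * y := rfl

theorem conj_mul (x y : Octo) : conj (x * y) = conj y * conj x := by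
  apply octo_ext <;> simp

theorem conj_conj (x : Octo) : conj (conj x) = x := by
  apply octo_ext <;> simp

theorem conj_e (i : Fin 8) : conj (e i) = (if i = 0 then 1 else -1 : ℤ) • e i := by
  fin_cases i <;> apply octo_ext <;> ext <;> simp [e]

end Octo
namespace IsOMod

open Octo

variable {M : Type*} [AddCommGroup M] [Module ℝ M] {sm : Octo → M → M}

/-- The scalar multiplication as a bilinear map. -/
def L (h : IsOMod sm) : Octo →ₗ[ℝ] M →ₗ[ℝ] M :=
  LinearMap.mk₂ ℝ sm h.add_smul h.real_smul h.smul_add h.smul_real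

theorem L_apply (h : IsOMod sm) (p : Octo) (m : M) : h.L p m = sm p m := rfl

theorem L_e_zero (h : IsOMod sm) (m : M) : h.L (e 0) m = m := h.one_smul m

theorem L_sq (h : IsOMod sm) (i : Fin 8) (hi : 0 < i) (m : M) :
    h.L (e i) (h.L (e i) m) = -m := by
  have h1 : e i * e i = -1 := by
    rw [e_mul, ← e_zero]
    revert hi
    fin_cases i <;> simp [sg, ix]
  have h2 := h.alt (e i) (e i) m
  rw [h1, ← L_apply h, ← L_apply h, ← L_apply h, map_neg, ← e_zero, LinearMap.neg_apply,
    L_e_zero] at h2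
  have h3 : (2 : ℝ) • (h.L (e i) (h.L (e i) m) + m) = 0 := by
    rw [two_smul]
    nth_rewrite 1 [← sub_eq_zero.mpr h2.symm]
    abel
  have h4 := (smul_eq_zero.mp h3).resolve_left two_ne_zero
  exact eq_neg_of_add_eq_zero_left h4

theorem L_anti (h : IsOMod sm) (i j : Fin 8) (hi : 0 < i) (hj : i < j) (m : M) :
    h.L (e j) (h.L (e i) m) = - h.L (e i) (h.L (e j) m) := by
  have h1 : e i * e j = - (e j * e i) := by
    rw [e_mul, e_mul]
    revert hi hj
    fin_cases i <;> fin_cases j <;> simp [sg, ix]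
  have h2 := h.alt (e i) (e j) m
  rw [h1] at h2
  simp only [← L_apply h, map_neg, LinearMap.neg_apply] at h2
  rw [← sub_eq_zero, ← neg_eq_zero, ← sub_eq_zero.mpr h2]
  abel

/-- Stabilizer of the unit for the triple `i, j, k`. -/
def S (h : IsOMod sm) (i j k : Fin 8) : M →ₗ[ℝ] M :=
  LinearMap.id - (h.L (e i)).comp ((h.L (e j)).comp (h.L (e k)))

theorem S_apply (h : IsOMod sm) (i j k : Fin 8) (m : M) :
    h.S i j k m = m - h.L (e i) (h.L (e j) (h.L (e k) m)) := rfl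

/-- Sixteen times the projection onto the associative elements. -/
def P (h : IsOMod sm) : M →ₗ[ℝ] M :=
  (h.S 1 2 3).comp ((h.S 1 4 5).comp ((h.S 2 4 6).comp (h.S 3 4 7)))

theorem P_apply (h : IsOMod sm) (m : M) :
    h.P m = h.S 1 2 3 (h.S 1 4 5 (h.S 2 4 6 (h.S 3 4 7 m))) := rfl

/-- The three products on an oriented line, acting on a fixed element. -/
theorem line_left (h : IsOMod sm) (i j k : Fin 8) (hi : 0 < i) (hij : i < j) (hjk : j < k)
    (a : M) (s : ℤ) (hs : s * s = 1)
    (H : h.L (e i) (h.L (e j) (h.L (e k) a)) = -(s • a)) :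
    h.L (e i) (h.L (e j) a) = s • h.L (e k) a ∧ h.L (e j) (h.L (e k) a) = s • h.L (e i) a ∧
      h.L (e i) (h.L (e k) a) = -(s • h.L (e j) a) := by
  have h1 : h.L (e j) (h.L (e k) a) = s • h.L (e i) a := by
    have := congrArg (h.L (e i)) H
    rw [L_sq h i hi, map_neg, map_zsmul] at this
    exact neg_injective this
  have h2 : h.L (e k) a = -(s • h.L (e j) (h.L (e i) a)) := by
    have := congrArg (h.L (e j)) h1
    rw [L_sq h j (hi.trans hij), map_zsmul] at this
    rw [← this, neg_neg]
  have h3 : h.L (e i) (h.L (e k) a) = -(s • h.L (e j) a) := by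
    rw [h2, L_anti h i j hi hij, smul_neg, neg_neg, map_zsmul, L_sq h i hi, smul_neg]
  refine ⟨?_, h1, h3⟩
  rw [h2, smul_neg, smul_smul, hs, _root_.one_smul, L_anti h i j hi hij, neg_neg]

/-- The three products on an oriented line, followed by a linear map. -/
theorem line_right (h : IsOMod sm) (i j k : Fin 8) (hi : 0 < i) (hij : i < j) (hjk : j < k)
    (f : M →ₗ[ℝ] M) (s : ℤ)
    (H : ∀ a, f (h.L (e i) (h.L (e j) (h.L (e k) a))) = -(s • f a)) (a : M) :
    f (h.L (e i) (h.L (e j) a)) = s • f (h.L (e k) a) ∧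
      f (h.L (e j) (h.L (e k) a)) = s • f (h.L (e i) a) ∧
      f (h.L (e i) (h.L (e k) a)) = -(s • f (h.L (e j) a)) := by
  have h1 : ∀ a, f (h.L (e i) (h.L (e j) a)) = s • f (h.L (e k) a) := fun a => by
    have := H (h.L (e k) a)
    rw [L_sq h k (hi.trans (hij.trans hjk)), map_neg, map_neg, map_neg] at this
    exact neg_injective this
  have h3 : ∀ a, f (h.L (e i) (h.L (e k) a)) = -(s • f (h.L (e j) a)) := fun a => by
    have := H (h.L (e j) a)
    rw [L_anti h j k (hi.trans hij) hjk, map_neg, map_neg, L_sq h j (hi.trans hij), map_neg,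
      ← map_neg] at this
    simpa using this
  refine ⟨h1 a, ?_, h3 a⟩
  have h5 := H (h.L (e i) a)
  rw [L_anti h i k hi (hij.trans hjk), map_neg, L_anti h i j hi hij, neg_neg,
    L_sq h i hi, map_neg] at h5
  exact neg_injective h5

set_option maxHeartbeats 1000000 in
theorem P_left_e (h : IsOMod sm) (i j : Fin 8) (m : M) :
    h.L (e i) (h.L (e j) (h.P m)) = h.L (e i * e j) (h.P m) := by
  obtain ⟨a1, a2, a3⟩ := line_left h 1 2 3 (by decide) (by decide) (by decide) (h.P m) 1 rfl (by
    simp [P_apply, S_apply, L_sq, L_anti]; abel)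
  obtain ⟨b1, b2, b3⟩ := line_left h 1 4 5 (by decide) (by decide) (by decide) (h.P m) 1 rfl (by
    simp [P_apply, S_apply, L_sq, L_anti]; abel)
  obtain ⟨c1, c2, c3⟩ := line_left h 1 6 7 (by decide) (by decide) (by decide) (h.P m) (-1) rfl (by
    simp [P_apply, S_apply, L_sq, L_anti]; abel)
  obtain ⟨d1, d2, d3⟩ := line_left h 2 4 6 (by decide) (by decide) (by decide) (h.P m) 1 rfl (by
    simp [P_apply, S_apply, L_sq, L_anti]; abel)
  obtain ⟨e1, e2, e3⟩ := line_left h 2 5 7 (by decide) (by decide) (by decide) (h.P m) 1 rfl (by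
    simp [P_apply, S_apply, L_sq, L_anti]; abel)
  obtain ⟨f1, f2, f3⟩ := line_left h 3 4 7 (by decide) (by decide) (by decide) (h.P m) 1 rfl (by
    simp [P_apply, S_apply, L_sq, L_anti]; abel)
  obtain ⟨g1, g2, g3⟩ := line_left h 3 5 6 (by decide) (by decide) (by decide) (h.P m) (-1) rfl (by
    simp [P_apply, S_apply, L_sq, L_anti]; abel)
  rw [e_mul]
  generalize h.P m = a at *
  fin_cases i <;> fin_cases j <;>
    simp [L_sq, L_anti, L_e_zero, sg, ix, a1, a2, a3, b1, b2, b3, c1, c2, c3, d1, d2, d3,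
      e1, e2, e3, f1, f2, f3, g1, g2, g3]

set_option maxHeartbeats 1000000 in
theorem P_right_e (h : IsOMod sm) (i j : Fin 8) (m : M) :
    h.P (h.L (e i) (h.L (e j) m)) = h.P (h.L (e i * e j) m) := by
  obtain ⟨a1, a2, a3⟩ := line_right h 1 2 3 (by decide) (by decide) (by decide) h.P 1
    (by intro a; simp [P_apply, S_apply, L_sq, L_anti]; abel) m
  obtain ⟨b1, b2, b3⟩ := line_right h 1 4 5 (by decide) (by decide) (by decide) h.P 1
    (by intro a; simp [P_apply, S_apply, L_sq, L_anti]; abel) m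
  obtain ⟨c1, c2, c3⟩ := line_right h 1 6 7 (by decide) (by decide) (by decide) h.P (-1)
    (by intro a; simp [P_apply, S_apply, L_sq, L_anti]; abel) m
  obtain ⟨d1, d2, d3⟩ := line_right h 2 4 6 (by decide) (by decide) (by decide) h.P 1
    (by intro a; simp [P_apply, S_apply, L_sq, L_anti]; abel) m
  obtain ⟨e1, e2, e3⟩ := line_right h 2 5 7 (by decide) (by decide) (by decide) h.P 1
    (by intro a; simp [P_apply, S_apply, L_sq, L_anti]; abel) m
  obtain ⟨f1, f2, f3⟩ := line_right h 3 4 7 (by decide) (by decide) (by decide) h.P 1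
    (by intro a; simp [P_apply, S_apply, L_sq, L_anti]; abel) m
  obtain ⟨g1, g2, g3⟩ := line_right h 3 5 6 (by decide) (by decide) (by decide) h.P (-1)
    (by intro a; simp [P_apply, S_apply, L_sq, L_anti]; abel) m
  rw [e_mul]
  generalize h.P = f at *
  fin_cases i <;> fin_cases j <;>
    simp [L_sq, L_anti, L_e_zero, sg, ix, a1, a2, a3, b1, b2, b3, c1, c2, c3, d1, d2, d3,
      e1, e2, e3, f1, f2, f3, g1, g2, g3]

theorem P_sum (h : IsOMod sm) (m : M) :
    ∑ i, h.L (e i) (h.P (h.L (conj (e i)) m)) = 8 • m - 8 • h.L (e 1) (h.L (e 2) (h.L (e 3)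
      (h.L (e 4) (h.L (e 5) (h.L (e 6) (h.L (e 7) m)))))) := by
  simp [P_apply, S_apply, L_sq, L_anti, L_e_zero, conj_e, Fin.sum_univ_eight]
  abel

theorem P_of_assoc (h : IsOMod sm) (m : M) (hm : ∀ i j, h.L (e i) (h.L (e j) m) =
    h.L (e i * e j) m) (i : Fin 8) : h.P (h.L (e i) m) = if i = 0 then 16 • m else 0 := by
  simp only [e_mul, map_zsmul, LinearMap.smul_apply] at hm
  fin_cases i <;> simp [P_apply, S_apply, L_e_zero, hm, sg, ix] <;> abel

theorem P_of_conjAssoc (h : IsOMod sm) (m : M) (hm : ∀ i j, h.L (e i) (h.L (e j) m) =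
    h.L (e j * e i) m) (i : Fin 8) : h.P (h.L (e i) m) = 0 := by
  simp only [e_mul, map_zsmul, LinearMap.smul_apply] at hm
  fin_cases i <;> simp [P_apply, S_apply, L_e_zero, hm, sg, ix]

end IsOMod
namespace IsOMod

open Octo

variable {M : Type*} [AddCommGroup M] [Module ℝ M] {sm : Octo → M → M}
variable {N : Type*} [AddCommGroup N] [Module ℝ N] {sm' : Octo → N → N}

/-- Two bilinear maps on the octonions agreeing on basis vectors agree. -/
theorem bilin_ext {X : Type*} [AddCommGroup X] [Module ℝ X] {f g : Octo →ₗ[ℝ] Octo →ₗ[ℝ] X}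
    (h : ∀ i j, f (e i) (e j) = g (e i) (e j)) : f = g :=
  lin_ext fun i => lin_ext fun j => h i j

theorem P_left (h : IsOMod sm) (p q : Octo) (m : M) :
    h.L p (h.L q (h.P m)) = h.L (p * q) (h.P m) := by
  have : (h.L.compl₂ (h.L.flip (h.P m))) = mulL.compr₂ (h.L.flip (h.P m)) :=
    bilin_ext fun i j => h.P_left_e i j m
  exact congrArg (fun f => f p q) this

theorem P_right (h : IsOMod sm) (p q : Octo) (m : M) :
    h.P (h.L p (h.L q m)) = h.P (h.L (p * q) m) := by
  have : ((h.L.compl₂ (h.L.flip m)).compr₂ h.P) = mulL.compr₂ (h.P.comp (h.L.flip m)) :=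
    bilin_ext fun i j => h.P_right_e i j m
  exact congrArg (fun f => f p q) this

/-- The conjugate scalar multiplication. -/
def barSm (sm : Octo → M → M) : Octo → M → M := fun p m => sm (conj p) m

/-- The conjugate module. -/
theorem bar (h : IsOMod sm) : IsOMod (barSm sm) where
  smul_add p m n := h.smul_add _ m n
  add_smul p q m := by
    have : conj (p + q) = conj p + conj q := by apply octo_ext <;> simp; abel
    simp only [barSm, this, h.add_smul]
  real_smul r p m := by
    have : conj (r • p) = r • conj p := by apply octo_ext <;> simp
    simp only [barSm, this, h.real_smul]
  smul_real r p m := h.smul_real _ _ _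
  one_smul m := by
    have : conj 1 = 1 := by apply octo_ext <;> simp
    simp only [barSm, this, h.one_smul]
  alt p q m := by
    have := h.alt (conj q) (conj p) m
    simp only [barSm, conj_mul]
    rw [← sub_eq_zero] at this ⊢
    rw [← this]
    abel

theorem bar_L (h : IsOMod sm) (p : Octo) : h.bar.L p = h.L (conj p) := rfl

/-- The subspace of associative elements. -/
def A (h : IsOMod sm) : Submodule ℝ M where
  carrier := assocSet sm
  zero_mem' p q := by simp [oLassoc, h.osmul_zero]
  add_mem' {a b} ha hb p q := by
    have h1 := ha p q
    have h2 := hb p q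
    simp only [oLassoc, h.smul_add] at *
    rw [← add_zero (0 : M)]
    nth_rewrite 1 [← h1]
    rw [← h2]
    abel
  smul_mem' c a ha p q := by
    have h1 := ha p q
    simp only [oLassoc, h.smul_real] at *
    rw [← smul_sub, h1, smul_zero]

theorem mem_A (h : IsOMod sm) {m : M} :
    m ∈ h.A ↔ ∀ p q : Octo, h.L p (h.L q m) = h.L (p * q) m := by
  constructor
  · intro hm p q
    exact (sub_eq_zero.mp (hm p q)).symm
  · intro hm p q
    exact sub_eq_zero.mpr (hm p q).symm

theorem mem_A_bar (h : IsOMod sm) {m : M} :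
    m ∈ h.bar.A ↔ ∀ p q : Octo, h.L p (h.L q m) = h.L (q * p) m := by
  rw [mem_A]
  simp only [bar_L h, conj_mul]
  constructor
  · intro hm p q
    simpa [conj_conj] using hm (conj p) (conj q)
  · intro hm p q
    exact hm _ _

theorem span_assoc (h : IsOMod sm) : Submodule.span ℝ (assocSet sm) = h.A :=
  Submodule.span_eq h.A

theorem span_conjAssoc (h : IsOMod sm) : Submodule.span ℝ (conjAssocSet sm) = h.bar.A := by
  have : conjAssocSet sm = h.bar.A := by
    ext m
    rw [SetLike.mem_coe, mem_A_bar h]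
    exact ⟨fun hm p q => (hm q p).symm, fun hm p q => (hm q p).symm⟩
  rw [this]
  exact Submodule.span_eq h.bar.A

theorem P_mem (h : IsOMod sm) (m : M) : h.P m ∈ h.A :=
  h.mem_A.mpr fun p q => h.P_left p q m

/-- The projection onto the associative elements. -/
def pr (h : IsOMod sm) : M →ₗ[ℝ] h.A :=
  (1 / 16 : ℝ) • h.P.codRestrict h.A h.P_mem

theorem coe_pr (h : IsOMod sm) (m : M) : (h.pr m : M) = (1 / 16 : ℝ) • h.P m := rfl

theorem pr_right (h : IsOMod sm) (p q : Octo) (m : M) :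
    h.pr (h.L p (h.L q m)) = h.pr (h.L (p * q) m) := by
  apply Subtype.ext
  rw [coe_pr, coe_pr, P_right]

theorem pr_of_mem (h : IsOMod sm) (a : h.A) (i : Fin 8) :
    h.pr (h.L (e i) a) = if i = 0 then a else 0 := by
  apply Subtype.ext
  rw [coe_pr, P_of_assoc h a fun i j => h.mem_A.mp a.2 (e i) (e j)]
  split_ifs
  · module
  · simp

theorem pr_of_mem_bar (h : IsOMod sm) (b : M) (hb : b ∈ h.bar.A) (i : Fin 8) :
    h.pr (h.L (e i) b) = 0 := by
  apply Subtype.ext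
  rw [coe_pr, P_of_conjAssoc h b fun i j => h.mem_A_bar.mp hb (e i) (e j)]
  simp

theorem sum_eq (h : IsOMod sm) (m : M) :
    ∑ i, h.L (e i) (h.P (h.L (conj (e i)) m)) +
      ∑ i, h.bar.L (e i) (h.bar.P (h.bar.L (conj (e i)) m)) = (16 : ℝ) • m := by
  rw [P_sum, P_sum]
  simp [bar_L h, conj_e]
  module

/-- Extension of a map between associative elements to a homomorphism. -/
def ext (h : IsOMod sm) (h' : IsOMod sm') (g : h.A →ₗ[ℝ] h'.A) : M →ₗ[ℝ] N :=
  ∑ i, (h'.L (e i)).comp (h'.A.subtype.comp (g.comp (h.pr.comp (h.L (conj (e i))))))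

theorem ext_apply (h : IsOMod sm) (h' : IsOMod sm') (g : h.A →ₗ[ℝ] h'.A) (m : M) :
    ext h h' g m = ∑ i, h'.L (e i) (g (h.pr (h.L (conj (e i)) m))) := by
  simp [ext]

theorem ext_hom_e (h : IsOMod sm) (h' : IsOMod sm') (g : h.A →ₗ[ℝ] h'.A) (j : Fin 8) (m : M) :
    ext h h' g (h.L (e j) m) = h'.L (e j) (ext h h' g m) := by
  simp only [ext_apply, map_sum, pr_right]
  have key : ∀ (p q : Octo) (a : h'.A), h'.L p (h'.L q a) = h'.L (p * q) a :=
    fun p q a => h'.mem_A.mp a.2 p q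
  have hz : ∀ (n : ℤ) (p q : Octo), (n • p) * q = n • (p * q) := fun n p q => by
    simp only [← mulL_apply, map_zsmul, LinearMap.smul_apply]
  simp only [key, conj_e, hz, e_mul]
  fin_cases j <;> simp [Fin.sum_univ_eight, sg, ix] <;> abel

theorem ext_hom (h : IsOMod sm) (h' : IsOMod sm') (g : h.A →ₗ[ℝ] h'.A) (p : Octo) (m : M) :
    ext h h' g (h.L p m) = h'.L p (ext h h' g m) := by
  have : (ext h h' g).comp (h.L.flip m) = h'.L.flip (ext h h' g m) :=
    lin_ext fun i => ext_hom_e h h' g i m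
  exact congrArg (fun f => f p) this

theorem ext_hom_bar (h : IsOMod sm) (h' : IsOMod sm') (g : h.bar.A →ₗ[ℝ] h'.bar.A)
    (p : Octo) (m : M) :
    ext h.bar h'.bar g (h.L p m) = h'.L p (ext h.bar h'.bar g m) := by
  have := ext_hom h.bar h'.bar g (conj p) m
  rwa [bar_L, bar_L, conj_conj] at this

theorem ext_of_mem (h : IsOMod sm) (h' : IsOMod sm') (g : h.A →ₗ[ℝ] h'.A) (a : h.A) :
    ext h h' g a = g a := by
  have h0 : h.pr (a : M) = a := by simpa [L_e_zero] using h.pr_of_mem a 0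
  rw [ext_apply, Fin.sum_univ_eight]
  simp [conj_e, pr_of_mem, L_e_zero, h0]

theorem ext_of_mem_bar (h : IsOMod sm) (h' : IsOMod sm') (g : h.A →ₗ[ℝ] h'.A) (b : M)
    (hb : b ∈ h.bar.A) : ext h h' g b = 0 := by
  rw [ext_apply, Fin.sum_univ_eight]
  simp [conj_e, pr_of_mem_bar h b hb]

theorem mem_bar_bar (h : IsOMod sm) {m : M} (hm : m ∈ h.A) : m ∈ h.bar.bar.A := by
  rw [mem_A] at hm ⊢
  simpa [bar_L h.bar, bar_L h, conj_conj] using hm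

theorem hom_mem (h : IsOMod sm) (h' : IsOMod sm') (f : M →ₗ[ℝ] N)
    (hf : ∀ p m, f (h.L p m) = h'.L p (f m)) (a : M) (ha : a ∈ h.A) : f a ∈ h'.A := by
  rw [mem_A] at ha ⊢
  intro p q
  rw [← hf, ← hf, ← hf, ha]

/-- Restriction of homomorphisms to (conjugate) associative elements. -/
def res (h : IsOMod sm) (h' : IsOMod sm') :
    oHomSubmodule sm sm' h' →ₗ[ℝ] (h.A →ₗ[ℝ] h'.A) × (h.bar.A →ₗ[ℝ] h'.bar.A) where
  toFun f := (f.1.restrict (hom_mem h h' f.1 f.2),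
    f.1.restrict (hom_mem h.bar h'.bar f.1 fun p m => f.2 (conj p) m))
  map_add' _ _ := rfl
  map_smul' _ _ := rfl

theorem res_bijective (h : IsOMod sm) (h' : IsOMod sm') : Function.Bijective (res h h') := by
  constructor
  · rw [← LinearMap.ker_eq_bot, LinearMap.ker_eq_bot']
    intro f hf
    have h1 : ∀ a, a ∈ h.A → f.1 a = 0 := fun a ha =>
      congrArg (fun x => ((x.1 ⟨a, ha⟩ : h'.A) : N)) hf
    have h2 : ∀ a, a ∈ h.bar.A → f.1 a = 0 := fun a ha =>
      congrArg (fun x => ((x.2 ⟨a, ha⟩ : h'.bar.A) : N)) hf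
    apply Subtype.ext
    ext m
    have h3 := congrArg f.1 (h.sum_eq m)
    have f1 : ∀ p m, f.1 (h.L p m) = h'.L p (f.1 m) := f.2
    have f2 : ∀ p m, f.1 (h.bar.L p m) = h'.bar.L p (f.1 m) := fun p m => f.2 (conj p) m
    simp only [map_add, map_sum, f1 (e _), f2 (e _), h1 _ (h.P_mem _),
      h2 _ (h.bar.P_mem _), map_zero, Finset.sum_const_zero, add_zero, map_smul] at h3
    exact (smul_eq_zero.mp h3.symm).resolve_left (by norm_num)
  · rintro ⟨g, k⟩
    refine ⟨⟨ext h h' g + ext h.bar h'.bar k, fun p m => ?_⟩, ?_⟩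
    · have h1 := ext_hom h h' g p m
      have h2 := ext_hom_bar h h' k p m
      rw [L_apply, L_apply] at h1 h2
      rw [LinearMap.add_apply, LinearMap.add_apply, h'.smul_add, h1, h2]
    · refine Prod.ext ?_ ?_
      · ext a
        change ext h h' g a + ext h.bar h'.bar k a = g a
        rw [ext_of_mem, ext_of_mem_bar h.bar h'.bar k a (h.mem_bar_bar a.2), add_zero]
      · ext a
        change ext h h' g a + ext h.bar h'.bar k a = k a
        rw [ext_of_mem, ext_of_mem_bar h h' g a a.2, zero_add]

end IsOMod

/-- For finite-dimensional left 𝕆-modules `M`, `N` of types `(m₁,m₂)` and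
`(n₁,n₂)`, `Hom_𝕆(M,N) ≅ M_{n₁×m₁}(ℝ) ⊕ M_{n₂×m₂}(ℝ)` as real vector spaces; in particular
`dim_ℝ Hom_𝕆(M,N) = n₁m₁ + n₂m₂`. -/
theorem stmt13 {M : Type*} [AddCommGroup M] [Module ℝ M] [FiniteDimensional ℝ M]
    {N : Type*} [AddCommGroup N] [Module ℝ N] [FiniteDimensional ℝ N]
    (sm : Octo → M → M) (sm' : Octo → N → N) (h : IsOMod sm) (h' : IsOMod sm')
    (m₁ m₂ n₁ n₂ : ℕ)
    (hm₁ : m₁ = Module.finrank ℝ (Submodule.span ℝ (assocSet sm)))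
    (hm₂ : m₂ = Module.finrank ℝ (Submodule.span ℝ (conjAssocSet sm)))
    (hn₁ : n₁ = Module.finrank ℝ (Submodule.span ℝ (assocSet sm')))
    (hn₂ : n₂ = Module.finrank ℝ (Submodule.span ℝ (conjAssocSet sm'))) :
    Nonempty ((oHomSubmodule sm sm' h') ≃ₗ[ℝ]
        (Matrix (Fin n₁) (Fin m₁) ℝ × Matrix (Fin n₂) (Fin m₂) ℝ)) ∧
      Module.finrank ℝ (oHomSubmodule sm sm' h') = n₁ * m₁ + n₂ * m₂ := by
  rw [h.span_assoc] at hm₁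
  rw [h.span_conjAssoc] at hm₂
  rw [h'.span_assoc] at hn₁
  rw [h'.span_conjAssoc] at hn₂
  have E : (oHomSubmodule sm sm' h') ≃ₗ[ℝ]
      (Matrix (Fin n₁) (Fin m₁) ℝ × Matrix (Fin n₂) (Fin m₂) ℝ) :=
    (LinearEquiv.ofBijective _ (IsOMod.res_bijective h h')).trans
      (LinearEquiv.prodCongr
        (LinearMap.toMatrix (Module.finBasisOfFinrankEq ℝ h.A hm₁.symm)
          (Module.finBasisOfFinrankEq ℝ h'.A hn₁.symm))
        (LinearMap.toMatrix (Module.finBasisOfFinrankEq ℝ h.bar.A hm₂.symm)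
          (Module.finBasisOfFinrankEq ℝ h'.bar.A hn₂.symm)))
  refine ⟨⟨E⟩, ?_⟩
  rw [E.finrank_eq, Module.finrank_prod, Module.finrank_matrix, Module.finrank_matrix]
  simp
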